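/- arXiv:1203.1955 — 2 statements merged into one kernel-verified Lean document; each statement's English description precedes it below -/
import Mathlib

section
/- Let R be a commutative noetherian local ring and let X be any class of finitely generated R-modules. Then V(⋂_{i>0, L finite length, M ∈ X} Ann_R Ext_R^i(L,M)) = V(⋂_{i>0, N, M ∈ X} Ann_R Ext_R^i(N,M)), where L ranges over all finite-length R-modules and N ranges over all finitely generated R-modules. -/
open CategoryTheory IsLocalRing

noncomputable section

/-- The `i`-th Tor module of two `R`-modules, as an object of `ModuleCat R`. -/
def TorMod (R : Type) [CommRing R] (i : ℕ) (M N : ModuleCat.{0} R) : ModuleCat.{0} R :=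
  ((Tor (ModuleCat.{0} R) i).obj M).obj N

/-- The `i`-th Ext module of two `R`-modules, as an object of `ModuleCat R`. -/
def ExtMod (R : Type) [CommRing R] (i : ℕ) (M N : ModuleCat.{0} R) : ModuleCat.{0} R :=
  ((Ext R (ModuleCat.{0} R) i).obj (Opposite.op M)).obj N

/-- Integer-indexed Tor: `Tor_n = 0` for `n < 0`. -/
def TorZ (R : Type) [CommRing R] (n : ℤ) (M N : ModuleCat.{0} R) : ModuleCat.{0} R :=
  if 0 ≤ n then TorMod R n.toNat M N else ModuleCat.of R PUnit

/-- Integer-indexed Ext: `Ext^n = 0` for `n < 0`. -/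
def ExtZ (R : Type) [CommRing R] (n : ℤ) (M N : ModuleCat.{0} R) : ModuleCat.{0} R :=
  if 0 ≤ n then ExtMod R n.toNat M N else ModuleCat.of R PUnit

/-- The depth of a module `N` over a local ring `S`, defined as the infimum of the set of
integers `i` such that `Ext^i(k, N) ≠ 0`, where `k` is the residue field of `S`
(`⊤` if no such `i` exists). -/
def moduleDepth (S : Type) [CommRing S] [IsLocalRing S] (N : Type) [AddCommGroup N]
    [Module S N] : ℕ∞ :=
  sInf {i : ℕ∞ | ∃ j : ℕ, i = (j : ℕ∞) ∧
    Nontrivial (ExtMod S j (ModuleCat.of S (ResidueField S)) (ModuleCat.of S N))}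

/-- A local ring is regular if it is noetherian and its maximal ideal can be generated by
(Krull dimension of `S`)-many elements. -/
def IsRegularLocal (S : Type) [CommRing S] [IsLocalRing S] : Prop :=
  IsNoetherianRing S ∧ ∃ s : Finset S, Ideal.span (s : Set S) = maximalIdeal S ∧
    (s.card : WithBot ℕ∞) = ringKrullDim S

/-- A local ring is Cohen-Macaulay if its depth (as a module over itself) equals its
Krull dimension. -/
def IsCMLocalRing (R : Type) [CommRing R] [IsLocalRing R] : Prop :=
  (moduleDepth R R : WithBot ℕ∞) = ringKrullDim R

/-- A module `M` over a local ring `R` is maximal Cohen-Macaulay if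
`depth M_p ≥ dim R_p` for every prime ideal `p` of `R`. -/
def IsMCMModule (R : Type) [CommRing R] [IsLocalRing R] (M : Type) [AddCommGroup M]
    [Module R M] : Prop :=
  ∀ (p : Ideal R) [p.IsPrime],
    ringKrullDim (Localization.AtPrime p) ≤
      (moduleDepth (Localization.AtPrime p) (LocalizedModule p.primeCompl M) : WithBot ℕ∞)

/-- Membership in `CM(R)`: finitely generated maximal Cohen-Macaulay modules. -/
def MemCM (R : Type) [CommRing R] [IsLocalRing R] (M : ModuleCat.{0} R) : Prop :=
  Module.Finite R M ∧ IsMCMModule R M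

/-- Membership in `CM₀(R)`: finitely generated maximal Cohen-Macaulay modules that are
locally free on the punctured spectrum. -/
def MemCM0 (R : Type) [CommRing R] [IsLocalRing R] (M : ModuleCat.{0} R) : Prop :=
  Module.Finite R M ∧ IsMCMModule R M ∧
    ∀ (p : Ideal R) [p.IsPrime], p ≠ maximalIdeal R →
      Module.Free (Localization.AtPrime p) (LocalizedModule p.primeCompl M)

/-- The singular locus of `R`: primes `p` such that `R_p` is not regular. -/
def singularLocus (R : Type) [CommRing R] : Set (PrimeSpectrum R) :=
  {p | ¬ IsRegularLocal (Localization.AtPrime p.asIdeal)}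

/-- The nonfree locus of a module `M`: primes `p` such that `M_p` is not a free
`R_p`-module. -/
def nonfreeLocus (R : Type) [CommRing R] (M : Type) [AddCommGroup M] [Module R M] :
    Set (PrimeSpectrum R) :=
  {p | ¬ Module.Free (Localization.AtPrime p.asIdeal)
        (LocalizedModule p.asIdeal.primeCompl M)}

/-- `K` is a first syzygy of `N` in a minimal free resolution: there is a surjection
`f : R^n → N` with `ker f ⊆ m·R^n` and `K ≅ ker f`. -/
def IsMinimalSyzygy1 (R : Type) [CommRing R] [IsLocalRing R] (N K : ModuleCat.{0} R) : Prop :=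
  ∃ (n : ℕ) (f : (Fin n → R) →ₗ[R] N), Function.Surjective f ∧
    LinearMap.ker f ≤ (maximalIdeal R) • (⊤ : Submodule R (Fin n → R)) ∧
    Nonempty (K ≃ₗ[R] LinearMap.ker f)

/-- `K` is a `d`-th syzygy of `N` in a minimal free resolution. -/
def IsMinimalSyzygy (R : Type) [CommRing R] [IsLocalRing R] :
    ℕ → ModuleCat.{0} R → ModuleCat.{0} R → Prop
  | 0, N, K => Nonempty ((K : Type) ≃ₗ[R] N)
  | d + 1, N, K => ∃ L : ModuleCat.{0} R, IsMinimalSyzygy1 R N L ∧ IsMinimalSyzygy R d L K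

/-- A module is indecomposable if it is nonzero and is not isomorphic to the direct sum of
two nonzero modules. -/
def IndecomposableModule (R : Type) [CommRing R] (M : Type) [AddCommGroup M] [Module R M] :
    Prop :=
  Nontrivial M ∧ ∀ (A B : Type) [AddCommGroup A] [Module R A] [AddCommGroup B] [Module R B],
    Nonempty (M ≃ₗ[R] A × B) → (Subsingleton A ∨ Subsingleton B)

/-!
Let `J` be the Jacobson radical, so that the finite length modules are the finitely generated ones
on which `J` acts nilpotently, and let `a` annihilate `Ext^i(L, M)` for all `i > 0` and all such
`L`. The requirement of nilpotency is removed one generator `x` of `J` at a time. A finitely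
generated `N` is an extension of an `x`-torsion-free module `N/K` by its `x`-power torsion `K`, on
which `x` is nilpotent. If `a` annihilates all `Ext^{i+1}((N/K)/x^n(N/K), M)`, then
`a Ext^i(N/K, M) ⊆ x^n Ext^i(N/K, M)` for all `n`, hence `a Ext^i(N/K, M) = 0` by Krull's
intersection theorem. So each generator costs one squaring of `a`, and the final exponent does not
depend on `i`, `N` or `M`.
-/

universe w v u

section Modules

variable {R : Type u} [CommRing R]

lemma isFiniteLength_of_minimalPrimes_annihilator_isMaximal [IsNoetherianRing R] (L : Type v)
    [AddCommGroup L] [Module R L] [Module.Finite R L]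
    (hL : ∀ p ∈ (Module.annihilator R L).minimalPrimes, p.IsMaximal) : IsFiniteLength R L := by
  rw [isFiniteLength_iff_isNoetherian_isArtinian]
  refine ⟨inferInstance, ?_⟩
  let I := Module.annihilator R L
  have hI : Module.IsTorsionBySet R L I := Module.isTorsionBySet_annihilator R L
  let : Module (R ⧸ I) L := hI.module
  have : IsScalarTower R (R ⧸ I) L := hI.isScalarTower
  have : Module.Finite (R ⧸ I) L := Module.Finite.of_restrictScalars_finite R _ _
  have : IsArtinianRing (R ⧸ I) :=
    isArtinianRing_iff_krullDimLE_zero.2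
      (Ideal.krullDimLE_zero_quotient_iff_forall_minimalPrimes_isMaximal.2 hL)
  exact isArtinian_of_surjective_algebraMap (R := R ⧸ I) Ideal.Quotient.mk_surjective

lemma isMaximal_of_jacobson_bot_le [Finite (MaximalSpectrum R)] (p : Ideal R) [p.IsPrime]
    (hp : Ideal.jacobson ⊥ ≤ p) : p.IsMaximal := by
  have := Fintype.ofFinite (MaximalSpectrum R)
  have hinf : Finset.univ.inf MaximalSpectrum.asIdeal ≤ p := by
    refine le_trans (le_sInf fun m hm ↦ ?_) hp
    exact Finset.inf_le (f := MaximalSpectrum.asIdeal) (Finset.mem_univ ⟨m, hm.2⟩)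
  obtain ⟨m, -, hmp⟩ := (Ideal.IsPrime.inf_le' inferInstance).1 hinf
  exact m.isMaximal.eq_of_le Ideal.IsPrime.ne_top' hmp ▸ m.isMaximal

lemma isFiniteLength_of_jacobson_le_radical_annihilator [IsNoetherianRing R]
    [Finite (MaximalSpectrum R)] (L : Type v) [AddCommGroup L] [Module R L] [Module.Finite R L]
    (hL : Ideal.jacobson ⊥ ≤ (Module.annihilator R L).radical) : IsFiniteLength R L :=
  isFiniteLength_of_minimalPrimes_annihilator_isMaximal L fun p hp ↦
    have : p.IsPrime := hp.1.1
    isMaximal_of_jacobson_bot_le p (hL.trans (this.radical_le_iff.2 hp.1.2))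

/-- `K` is the `x`-power torsion of `N`, which is already the kernel of one power of `x`. -/
lemma exists_mem_radical_annihilator_isSMulRegular_quotient (N : Type v) [AddCommGroup N]
    [Module R N] [IsNoetherian R N] (x : R) :
    ∃ K : Submodule R N, x ∈ K.annihilator.radical ∧ IsSMulRegular (N ⧸ K) x := by
  have hpow (n : ℕ) (y : N) : (LinearMap.lsmul R N x ^ n) y = x ^ n • y :=
    congrArg (· y) (map_pow (Algebra.lsmul R R N) x n).symm
  obtain ⟨s, hs⟩ := (LinearMap.lsmul R N x).eventually_iSup_ker_pow_eq.exists
  refine ⟨LinearMap.ker (LinearMap.lsmul R N x ^ s), ⟨s, ?_⟩, ?_⟩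
  · rw [Submodule.mem_annihilator]
    intro y hy
    rwa [LinearMap.mem_ker, hpow] at hy
  · rw [isSMulRegular_iff_right_eq_zero_of_smul]
    intro y hy
    obtain ⟨y, rfl⟩ := Submodule.Quotient.mk_surjective _ y
    rw [← Submodule.Quotient.mk_smul, Submodule.Quotient.mk_eq_zero, LinearMap.mem_ker, hpow,
      ← mul_smul, ← pow_succ, ← hpow] at hy
    rw [Submodule.Quotient.mk_eq_zero, ← hs]
    exact Submodule.mem_iSup_of_mem (s + 1) hy

end Modules

section ExtComparison

variable {R : Type u} [CommRing R]

lemma mem_annihilator_homology_iff (S : ShortComplex (ModuleCat.{v} R)) (r : R) :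
    r ∈ Module.annihilator R S.homology ↔
      ∀ y : S.X₂, S.g y = 0 → ∃ x : S.X₁, S.f x = r • y := by
  rw [S.moduleCatHomologyIso.toLinearEquiv.annihilator_eq]
  change r ∈ Module.annihilator R (LinearMap.ker S.g.hom ⧸ LinearMap.range S.moduleCatToCycles) ↔ _
  simp only [Submodule.annihilator_quotient, Submodule.mem_colon, Set.mem_univ, forall_const,
    Subtype.forall, LinearMap.mem_range, Subtype.ext_iff]
  rfl

variable {C : Type*} [Category.{v} C] [Abelian C] [Linear R C] {N : C}

lemma mem_annihilator_ext_functor_succ_iff [EnoughProjectives C] (P : ProjectiveResolution N)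
    (M : C) (n : ℕ) (r : R) :
    r ∈ Module.annihilator R (((Ext R C (n + 1)).obj (Opposite.op N)).obj M) ↔
      ∀ f : P.complex.X (n + 1) ⟶ M, P.complex.d (n + 2) (n + 1) ≫ f = 0 →
        ∃ g : P.complex.X n ⟶ M, P.complex.d (n + 1) n ≫ g = r • f := by
  let K := P.complex.linearYonedaObj R M
  have e : ((Ext R C (n + 1)).obj (Opposite.op N)).obj M ≅ (K.sc' n (n + 1) (n + 2)).homology :=
    P.isoExt (n + 1) M ≪≫
      ShortComplex.homologyMapIso (K.isoSc' n (n + 1) (n + 2) (by simp) (by simp))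
  rw [e.toLinearEquiv.annihilator_eq, mem_annihilator_homology_iff]
  rfl

lemma mem_annihilator_ext_succ_iff [HasExt.{w} C] (P : ProjectiveResolution N) (M : C) (n : ℕ)
    (r : R) :
    r ∈ Module.annihilator R (Abelian.Ext N M (n + 1)) ↔
      ∀ f : P.complex.X (n + 1) ⟶ M, P.complex.d (n + 2) (n + 1) ≫ f = 0 →
        ∃ g : P.complex.X n ⟶ M, P.complex.d (n + 1) n ≫ g = r • f := by
  have smul_extMk_eq_zero_iff (f : P.complex.X (n + 1) ⟶ M)
      (hf : P.complex.d (n + 2) (n + 1) ≫ f = 0) :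
      r • P.extMk f (n + 2) rfl hf = 0 ↔
        ∃ g : P.complex.X n ⟶ M, P.complex.d (n + 1) n ≫ g = r • f := by
    rw [Abelian.Ext.smul_eq_comp_mk₀, P.extMk_comp_mk₀, P.extMk_eq_zero_iff _ _ _ _ n rfl,
      Linear.comp_smul, Category.comp_id]
  rw [Module.mem_annihilator]
  constructor
  · intro h f hf
    exact (smul_extMk_eq_zero_iff f hf).1 (h _)
  · intro h e
    obtain ⟨f, hf, rfl⟩ := P.extMk_surjective e (n + 2) rfl
    exact (smul_extMk_eq_zero_iff f hf).2 (h f hf)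

/-- `Ext R C` is defined by derived functors, whereas the long exact sequences are only available
for `Abelian.Ext`, defined through the derived category. -/
lemma annihilator_ext_functor_succ [EnoughProjectives C] [HasExt.{w} C] (N M : C) (n : ℕ) :
    Module.annihilator R (((Ext R C (n + 1)).obj (Opposite.op N)).obj M) =
      Module.annihilator R (Abelian.Ext N M (n + 1)) := by
  ext r
  rw [mem_annihilator_ext_functor_succ_iff (projectiveResolution N),
    mem_annihilator_ext_succ_iff (projectiveResolution N)]

end ExtComparison

section PosExtAnnihilator

variable (R : Type u) [CommRing R] {C : Type*} [Category.{v} C] [Abelian C] [Linear R C]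
  [HasExt.{w} C]

/-- The ideal of all `r : R` that annihilate `Ext^i(N, M)` for every `i > 0`. -/
def posExtAnnihilator (N M : C) : Ideal R :=
  ⨅ i : ℕ, Module.annihilator R (Abelian.Ext N M (i + 1))

variable {R}

lemma mem_posExtAnnihilator_iff {N M : C} {r : R} :
    r ∈ posExtAnnihilator R N M ↔ ∀ (i : ℕ) (e : Abelian.Ext N M (i + 1)), r • e = 0 := by
  simp only [posExtAnnihilator, Submodule.mem_iInf, Module.mem_annihilator]

lemma posExtAnnihilator_mul_le_of_shortExact {S : ShortComplex C} (hS : S.ShortExact)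
    (M : C) :
    posExtAnnihilator R S.X₁ M * posExtAnnihilator R S.X₃ M ≤ posExtAnnihilator R S.X₂ M := by
  rw [Ideal.mul_le]
  intro a ha b hb
  rw [mem_posExtAnnihilator_iff] at ha hb ⊢
  intro i e
  have restrict_eq_zero : (Abelian.Ext.mk₀ S.f).comp (a • e) (zero_add _) = 0 := by
    rw [Abelian.Ext.comp_smul, ha]
  obtain ⟨e', he'⟩ := Abelian.Ext.contravariant_sequence_exact₂ hS M (a • e) restrict_eq_zero
  rw [mul_comm, mul_smul, ← he', ← Abelian.Ext.comp_smul, hb, Abelian.Ext.comp_zero]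

open Pointwise in
lemma smul_ext_mem_smul_top_of_shortExact {A B M : C} {x : R} {g : A ⟶ B}
    {zero : (x • 𝟙 A) ≫ g = 0}
    (hS : (ShortComplex.mk (x • 𝟙 A) g zero).ShortExact) {a : R} {j : ℕ}
    (ha : a ∈ Module.annihilator R (Abelian.Ext B M (j + 1))) (e : Abelian.Ext A M j) :
    a • e ∈ x • (⊤ : Submodule R (Abelian.Ext A M j)) := by
  have boundary_eq_zero : hS.extClass.comp (a • e) (add_comm 1 j) = 0 := by
    rw [Abelian.Ext.comp_smul]
    exact Module.mem_annihilator.1 ha _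
  obtain ⟨e', he'⟩ :=
    Abelian.Ext.contravariant_sequence_exact₁ hS M (a • e) (add_comm 1 j) boundary_eq_zero
  rw [Abelian.Ext.mk₀_smul, Abelian.Ext.smul_comp, Abelian.Ext.mk₀_id_comp] at he'
  exact he' ▸ Submodule.smul_mem_pointwise_smul _ _ _ trivial

lemma iInf_posExtAnnihilator_quotSMulTop_pow_le [Small.{v} R] [IsNoetherianRing R]
    {M N : ModuleCat.{v} R} [Module.Finite R M] [Module.Finite R N] {x : R}
    (hxJ : x ∈ Ideal.jacobson (⊥ : Ideal R))
    (hx : IsSMulRegular N x) :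
    ⨅ n : ℕ, posExtAnnihilator R (ModuleCat.of R (QuotSMulTop (x ^ n) N)) M ≤
      posExtAnnihilator R N M := by
  intro a ha
  rw [mem_posExtAnnihilator_iff]
  intro i e
  rw [Submodule.mem_iInf] at ha
  have krull := Ideal.iInf_pow_smul_eq_bot_of_le_jacobson (M := Abelian.Ext N M (i + 1))
    (Ideal.span {x}) ((Ideal.span_singleton_le_iff_mem _).2 hxJ)
  rw [← Submodule.mem_bot R, ← krull, Submodule.mem_iInf]
  intro n
  rw [Ideal.span_singleton_pow, Submodule.ideal_span_singleton_smul]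
  exact smul_ext_mem_smul_top_of_shortExact (hx.pow n).smulShortComplex_shortExact
    (Module.mem_annihilator.2 (mem_posExtAnnihilator_iff.1 (ha n) (i + 1))) e

end PosExtAnnihilator

section Torsion

variable {R : Type u} [CommRing R] [Small.{v} R]

/-- The ideal of all `r : R` that annihilate `Ext^i(N, M)` for every `i > 0` and every finitely
generated module `N` whose support lies in `V(I)`, encoded as `I ≤ √(Ann N)`. -/
def torsionExtAnnihilator (I : Ideal R) (M : ModuleCat.{v} R) : Ideal R :=
  ⨅ (N : ModuleCat.{v} R) (_ : Module.Finite R N) (_ : I ≤ (Module.annihilator R N).radical),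
    posExtAnnihilator R N M

lemma torsionExtAnnihilator_le {I : Ideal R} (M N : ModuleCat.{v} R) [hN : Module.Finite R N]
    (hI : I ≤ (Module.annihilator R N).radical) :
    torsionExtAnnihilator I M ≤ posExtAnnihilator R N M :=
  iInf₂_le_of_le N hN (iInf_le _ hI)

variable [IsNoetherianRing R] (M : ModuleCat.{v} R) [Module.Finite R M]

lemma torsionExtAnnihilator_span_singleton_sup_sq_le (I : Ideal R) {x : R}
    (hx : x ∈ Ideal.jacobson (⊥ : Ideal R)) :
    torsionExtAnnihilator (Ideal.span {x} ⊔ I) M ^ 2 ≤ torsionExtAnnihilator I M := by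
  refine le_iInf fun N ↦ le_iInf₂ fun _ hI ↦ ?_
  have span_sup_le {L : Type v} [AddCommGroup L] [Module R L]
      (hL : Module.annihilator R N ≤ Module.annihilator R L)
      (hxL : x ∈ (Module.annihilator R L).radical) :
      Ideal.span {x} ⊔ I ≤ (Module.annihilator R L).radical :=
    sup_le ((Ideal.span_singleton_le_iff_mem _).2 hxL) (hI.trans (Ideal.radical_mono hL))
  obtain ⟨K, hxK, hreg⟩ := exists_mem_radical_annihilator_isSMulRegular_quotient N x
  have le_sub : torsionExtAnnihilator (Ideal.span {x} ⊔ I) M ≤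
      posExtAnnihilator R (ModuleCat.of R K) M :=
    torsionExtAnnihilator_le M _ <|
      span_sup_le (K.subtype.annihilator_le_of_injective K.injective_subtype) hxK
  have le_quot : torsionExtAnnihilator (Ideal.span {x} ⊔ I) M ≤
      posExtAnnihilator R (ModuleCat.of R (N ⧸ K)) M := by
    refine le_trans (le_iInf fun n ↦ torsionExtAnnihilator_le M _ (span_sup_le ?_ ?_))
      (iInf_posExtAnnihilator_quotSMulTop_pow_le hx hreg)
    · exact (K.mkQ.annihilator_le_of_surjective K.mkQ_surjective).trans
        ((Submodule.mkQ _).annihilator_le_of_surjective (Submodule.mkQ_surjective _))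
    · exact ⟨n, QuotSMulTop.mem_annihilator _ _⟩
  have hS : (ModuleCat.shortComplexOfCompEqZero K.subtype K.mkQ (by ext; simp)).ShortExact :=
    ModuleCat.shortComplex_shortExact _ (LinearMap.exact_subtype_mkQ K) K.injective_subtype
      K.mkQ_surjective
  calc torsionExtAnnihilator (Ideal.span {x} ⊔ I) M ^ 2
      ≤ posExtAnnihilator R (ModuleCat.of R K) M *
          posExtAnnihilator R (ModuleCat.of R (N ⧸ K)) M := by
        rw [sq]
        exact Ideal.mul_mono le_sub le_quot
    _ ≤ posExtAnnihilator R N M := posExtAnnihilator_mul_le_of_shortExact hS M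

lemma torsionExtAnnihilator_span_pow_le (s : Finset R)
    (hs : (s : Set R) ⊆ Ideal.jacobson (⊥ : Ideal R)) :
    torsionExtAnnihilator (Ideal.span (s : Set R)) M ^ 2 ^ s.card ≤
      torsionExtAnnihilator ⊥ M := by
  classical
  induction s using Finset.induction_on with
  | empty => simp
  | insert x s hxs ih =>
    rw [Finset.coe_insert, Set.insert_subset_iff] at hs
    rw [Finset.coe_insert, Ideal.span_insert, Finset.card_insert_of_notMem hxs, pow_succ', pow_mul]
    exact (Ideal.pow_right_mono
      (torsionExtAnnihilator_span_singleton_sup_sq_le M _ hs.1) _).trans (ih hs.2)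

variable (R) in
lemma exists_torsionExtAnnihilator_jacobson_pow_le_posExtAnnihilator :
    ∃ k ≠ 0, ∀ M N : ModuleCat.{v} R, Module.Finite R M → Module.Finite R N →
      torsionExtAnnihilator (Ideal.jacobson (⊥ : Ideal R)) M ^ k ≤ posExtAnnihilator R N M := by
  obtain ⟨s, hs⟩ := IsNoetherian.noetherian (Ideal.jacobson (⊥ : Ideal R))
  refine ⟨2 ^ s.card, by positivity, fun M N _ _ ↦ ?_⟩
  rw [← hs]
  exact (torsionExtAnnihilator_span_pow_le M s (hs ▸ Ideal.subset_span)).trans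
    (torsionExtAnnihilator_le M N bot_le)

end Torsion

lemma posExtAnnihilator_eq_iInf_annihilator_ExtMod {R : Type} [CommRing R] (N M : ModuleCat.{0} R) :
    posExtAnnihilator R N M =
      ⨅ (i : ℕ) (_ : 0 < i), Module.annihilator R (ExtMod R i N M) := by
  refine le_antisymm (le_iInf₂ fun i hi ↦ ?_) (le_iInf fun i ↦ ?_)
  · obtain ⟨i, rfl⟩ := Nat.exists_eq_add_of_le' hi
    exact (iInf_le _ i).trans (annihilator_ext_functor_succ N M i).ge
  · exact (iInf₂_le (i + 1) i.succ_pos).trans (annihilator_ext_functor_succ N M i).le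

theorem stmt12_general (R : Type) [CommRing R] [IsNoetherianRing R] [Finite (MaximalSpectrum R)]
    (X : Set (ModuleCat.{0} R)) (hX : ∀ M ∈ X, Module.Finite R M) :
    PrimeSpectrum.zeroLocus
        ((⨅ (i : ℕ) (_ : 0 < i) (L : ModuleCat.{0} R) (_ : IsFiniteLength R L)
            (M : ModuleCat.{0} R) (_ : M ∈ X),
            Module.annihilator R (ExtMod R i L M) : Ideal R) : Set R) =
      PrimeSpectrum.zeroLocus
        ((⨅ (i : ℕ) (_ : 0 < i) (N : ModuleCat.{0} R) (_ : Module.Finite R N)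
            (M : ModuleCat.{0} R) (_ : M ∈ X),
            Module.annihilator R (ExtMod R i N M) : Ideal R) : Set R) := by
  set 𝔞 : Ideal R := ⨅ (i : ℕ) (_ : 0 < i) (L : ModuleCat.{0} R) (_ : IsFiniteLength R L)
    (M : ModuleCat.{0} R) (_ : M ∈ X), Module.annihilator R (ExtMod R i L M)
  set 𝔟 : Ideal R := ⨅ (i : ℕ) (_ : 0 < i) (N : ModuleCat.{0} R) (_ : Module.Finite R N)
    (M : ModuleCat.{0} R) (_ : M ∈ X), Module.annihilator R (ExtMod R i N M)
  obtain ⟨k, hk, hpow⟩ := exists_torsionExtAnnihilator_jacobson_pow_le_posExtAnnihilator R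
  have 𝔟_le_𝔞 : 𝔟 ≤ 𝔞 := iInf₂_mono fun i _ ↦ iInf_mono fun L ↦ iInf_mono' fun hL ↦
    have := (isFiniteLength_iff_isNoetherian_isArtinian.1 hL).1
    ⟨inferInstance, le_rfl⟩
  have 𝔞_le (M) (hM : M ∈ X) : 𝔞 ≤ torsionExtAnnihilator (Ideal.jacobson ⊥) M := by
    refine le_iInf fun L ↦ le_iInf₂ fun _ hL ↦ ?_
    rw [posExtAnnihilator_eq_iInf_annihilator_ExtMod]
    have hfin := isFiniteLength_of_jacobson_le_radical_annihilator L hL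
    exact iInf₂_mono fun i _ ↦ iInf₂_le_of_le L hfin (iInf₂_le M hM)
  have 𝔞_pow_le_𝔟 : 𝔞 ^ k ≤ 𝔟 :=
    le_iInf₂ fun i hi ↦ le_iInf₂ fun N hN ↦ le_iInf₂ fun M hM ↦
      calc 𝔞 ^ k ≤ torsionExtAnnihilator (Ideal.jacobson ⊥) M ^ k :=
            Ideal.pow_right_mono (𝔞_le M hM) k
        _ ≤ posExtAnnihilator R N M := hpow M N (hX M hM) hN
        _ ≤ Module.annihilator R (ExtMod R i N M) := by
            rw [posExtAnnihilator_eq_iInf_annihilator_ExtMod]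
            exact iInf₂_le i hi
  refine Set.Subset.antisymm (PrimeSpectrum.zeroLocus_anti_mono_ideal 𝔟_le_𝔞) ?_
  rw [← PrimeSpectrum.zeroLocus_pow 𝔞 hk]
  exact PrimeSpectrum.zeroLocus_anti_mono_ideal 𝔞_pow_le_𝔟

/-- Let `R` be a noetherian local ring and `X` a class of finitely
generated `R`-modules. Then `V(⋂_{i>0, L fin.length, M ∈ X} Ann Ext^i(L,M)) =
V(⋂_{i>0, N f.g., M ∈ X} Ann Ext^i(N,M))`. -/
theorem stmt12 (R : Type) [CommRing R] [IsNoetherianRing R] [IsLocalRing R]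
    (X : Set (ModuleCat.{0} R)) (hX : ∀ M ∈ X, Module.Finite R M) :
    PrimeSpectrum.zeroLocus
        ((⨅ (i : ℕ) (_ : 0 < i) (L : ModuleCat.{0} R) (_ : IsFiniteLength R L)
            (M : ModuleCat.{0} R) (_ : M ∈ X),
            Module.annihilator R (ExtMod R i L M) : Ideal R) : Set R) =
      PrimeSpectrum.zeroLocus
        ((⨅ (i : ℕ) (_ : 0 < i) (N : ModuleCat.{0} R) (_ : Module.Finite R N)
            (M : ModuleCat.{0} R) (_ : M ∈ X),
            Module.annihilator R (ExtMod R i N M) : Ideal R) : Set R) :=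
  stmt12_general R X hX

end
end

section
/- Let R be a commutative noetherian ring, M a finitely generated R-module, and I an ideal of R such that the nonfree locus NF(M) equals V(I). Then there exists an integer h > 0 such that I^h annihilates Tor_i^R(M,X) and Ext_R^i(M,X) for all integers i > 0 and all finitely generated R-modules X. -/
open CategoryTheory IsLocalRing

noncomputable section

/-!
Choose a surjection `b : F → M` from a finite free module, and let `J` be the ideal of those `r`
for which `r • id` factors through `b`. If `r ∈ I`, then `M` is locally free on `D(r)`, so `M_r` is
projective and `b` splits after inverting `r`; clearing denominators puts a power of `r` in `J`.
As `I` is finitely generated, a power of `I` lies in `J`. Since `Tor_i(-, X)` and `Ext^i(-, X)` are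
`R`-linear, multiplication by an element of `J` on their values at `M` factors through their
values at `F`, which vanish for `i > 0`.
-/

section SplittingIdeal

variable {R F M : Type*} [CommRing R] [AddCommGroup F] [Module R F] [AddCommGroup M] [Module R M]

/-- The ideal of scalars `r` such that multiplication by `r` on `M` factors through `b : F → M`;
it is the unit ideal exactly when `b` splits. It is encoded as the preimage of the image of
`Hom(M, F) → End(M)` under the structure map `R → End(M)`. -/
def splittingIdeal (b : F →ₗ[R] M) : Ideal R :=
  (LinearMap.range (b.compRight R (M := M))).comap (Algebra.linearMap R (Module.End R M))

theorem mem_splittingIdeal {b : F →ₗ[R] M} {r : R} :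
    r ∈ splittingIdeal b ↔ ∃ a : M →ₗ[R] F, b ∘ₗ a = r • LinearMap.id :=
  Iff.rfl

theorem exists_mem_splittingIdeal_of_localized_section [Module.FinitePresentation R M]
    (S : Submonoid R) (b : F →ₗ[R] M) (σ : LocalizedModule S M →ₗ[R] LocalizedModule S F)
    (hσ : IsLocalizedModule.map S (LocalizedModule.mkLinearMap S F)
      (LocalizedModule.mkLinearMap S M) b ∘ₗ σ = LinearMap.id) :
    ∃ s ∈ S, s ∈ splittingIdeal b := by
  let locF := LocalizedModule.mkLinearMap S F
  let locM := LocalizedModule.mkLinearMap S M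
  obtain ⟨a, t, ha⟩ :=
    Module.FinitePresentation.exists_lift_of_isLocalizedModule S locF (σ ∘ₗ locM)
  have section_after_localization : locM ∘ₗ (b ∘ₗ a) = locM ∘ₗ (t • LinearMap.id) :=
    calc locM ∘ₗ (b ∘ₗ a)
      _ = IsLocalizedModule.map S locF locM b ∘ₗ locF ∘ₗ a := by
        rw [← LinearMap.comp_assoc, ← LinearMap.comp_assoc, IsLocalizedModule.map_comp]
      _ = t • (IsLocalizedModule.map S locF locM b ∘ₗ σ) ∘ₗ locM := by
        rw [ha, LinearMap.comp_smul, LinearMap.comp_assoc]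
      _ = locM ∘ₗ (t • LinearMap.id) := by
        rw [hσ, LinearMap.id_comp, LinearMap.comp_smul, LinearMap.comp_id]
  obtain ⟨u, hu⟩ := Module.Finite.exists_smul_of_comp_eq_of_isLocalizedModule S locM _ _
    section_after_localization
  refine ⟨u * t, (u * t).2, mem_splittingIdeal.mpr ⟨u • a, ?_⟩⟩
  rw [LinearMap.comp_smul, hu, smul_smul]
  rfl

theorem exists_pow_mem_splittingIdeal [Module.FinitePresentation R M] {b : F →ₗ[R] M}
    (hb : Function.Surjective b) (r : R)
    [Module.Projective (Localization.Away r) (LocalizedModule.Away r M)] :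
    ∃ n : ℕ, r ^ n ∈ splittingIdeal b := by
  let S := Submonoid.powers r
  obtain ⟨σ, hσ⟩ := Module.projective_lifting_property (LocalizedModule.map S b) LinearMap.id
    (LocalizedModule.map_surjective S b hb)
  obtain ⟨_, ⟨n, rfl⟩, hn⟩ := exists_mem_splittingIdeal_of_localized_section S b
    (σ.restrictScalars R) (congrArg (LinearMap.restrictScalars R) hσ)
  exact ⟨n, hn⟩

theorem le_radical_splittingIdeal [Module.FinitePresentation R M] {b : F →ₗ[R] M}
    (hb : Function.Surjective b) {I : Ideal R}
    (hI : (Module.freeLocus R M)ᶜ ⊆ PrimeSpectrum.zeroLocus (I : Set R)) :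
    I ≤ (splittingIdeal b).radical := by
  intro r hr
  have basicOpen_subset : (PrimeSpectrum.basicOpen r : Set (PrimeSpectrum R)) ⊆
      Module.freeLocus R M := fun p hp ↦ by
    by_contra hfree
    exact hp (hI hfree hr)
  have := Module.basicOpen_subset_freeLocus_iff.mp basicOpen_subset
  exact exists_pow_mem_splittingIdeal hb r

end SplittingIdeal

section LinearFunctors

open Limits

variable {R C D : Type*} [Semiring R] [Category* C] [Preadditive C] [Linear R C]
  [Category* D] [Preadditive D] [Linear R D]

/-- The `R`-linear structure on the opposite of an `R`-linear category. `Ext` is built from a left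
derived functor with values in `(ModuleCat R)ᵒᵖ`, which makes its linearity an instance of the
linearity of left derived functors. -/
instance linearOpposite : Linear R Cᵒᵖ where
  homModule _ _ :=
    { smul r f := (r • f.unop).op
      one_smul f := Quiver.Hom.unop_inj (one_smul R f.unop)
      mul_smul r s f := Quiver.Hom.unop_inj (mul_smul r s f.unop)
      smul_zero r := Quiver.Hom.unop_inj (smul_zero r)
      zero_smul f := Quiver.Hom.unop_inj (zero_smul R f.unop)
      smul_add r f g := Quiver.Hom.unop_inj (smul_add r f.unop g.unop)
      add_smul r s f := Quiver.Hom.unop_inj (add_smul r s f.unop) }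
  smul_comp _ _ _ r f g := Quiver.Hom.unop_inj (Linear.comp_smul _ _ _ g.unop r f.unop)
  comp_smul _ _ _ f r g := Quiver.Hom.unop_inj (Linear.smul_comp _ _ _ r g.unop f.unop)

instance rightOp_linear (F : Cᵒᵖ ⥤ D) [F.Linear R] : F.rightOp.Linear R where
  map_smul f r := congrArg Quiver.Hom.op (F.map_smul r f.op)

instance leftOp_linear (F : C ⥤ Dᵒᵖ) [F.Linear R] : F.leftOp.Linear R where
  map_smul f r := congrArg Quiver.Hom.unop (F.map_smul r f.unop)

instance homologyFunctor_linear [CategoryWithHomology C] {ι : Type*} (c : ComplexShape ι)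
    (n : ι) : (HomologicalComplex.homologyFunctor C c n).Linear R where
  map_smul f r :=
    ShortComplex.homologyMap_smul ((HomologicalComplex.shortComplexFunctor C c n).map f) r

instance tensoringLeft_linear [MonoidalCategory C] [MonoidalPreadditive C] [MonoidalLinear R C] :
    (MonoidalCategory.tensoringLeft C).Linear R where
  map_smul f r := by
    ext Y
    exact MonoidalLinear.smul_whiskerRight r f Y

instance single_linear [HasZeroObject C] {ι : Type*} [DecidableEq ι] (c : ComplexShape ι)
    (n : ι) : (HomologicalComplex.single C c n).Linear R where
  map_smul f r := by
    ext
    simp [HomologicalComplex.single_map_f_self]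

theorem smul_id_obj_eq_zero_of_factors (F : C ⥤ D) [F.Linear R] {X Z : C} {r : R} {f : X ⟶ Z}
    {g : Z ⟶ X} (hZ : IsZero (F.obj Z)) (hr : f ≫ g = r • 𝟙 X) : r • 𝟙 (F.obj X) = 0 := by
  rw [← F.map_id, ← F.map_smul, ← hr, F.map_comp, hZ.eq_zero_of_tgt (F.map f), zero_comp]

end LinearFunctors

section LeftDerived

open Limits

variable {C D : Type*} [Category* C] [Abelian C] [HasProjectiveResolutions C]
  [Category* D] [Abelian D]

instance leftDerived_linear {R : Type*} [Semiring R] [Linear R C] [Linear R D] (F : C ⥤ D)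
    [F.Additive] [F.Linear R] (n : ℕ) : (F.leftDerived n).Linear R where
  map_smul {X Y} f r := by
    let P := projectiveResolution X
    let Q := projectiveResolution Y
    let φ := ProjectiveResolution.lift f P Q
    have hφ : φ ≫ Q.π = P.π ≫ (ChainComplex.single₀ C).map f :=
      ProjectiveResolution.lift_commutes f P Q
    have hrφ : (r • φ) ≫ Q.π = P.π ≫ (ChainComplex.single₀ C).map (r • f) := by
      rw [Functor.map_smul, Linear.smul_comp, Linear.comp_smul, hφ]
    rw [F.leftDerived_map_eq n _ _ hrφ, F.leftDerived_map_eq n _ _ hφ, Functor.map_smul,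
      Linear.smul_comp, Linear.comp_smul]

theorem natTrans_leftDerived_smul {R : Type*} [Semiring R] [Linear R D] {F G : C ⥤ D}
    [F.Additive] [G.Additive] (r : R) (α : F ⟶ G) (n : ℕ) :
    NatTrans.leftDerived (r • α) n = r • NatTrans.leftDerived α n := by
  ext X
  let P := projectiveResolution X
  have mapHomologicalComplex_smul :
      (NatTrans.mapHomologicalComplex (r • α) (ComplexShape.down ℕ)).app P.complex =
        r • (NatTrans.mapHomologicalComplex α (ComplexShape.down ℕ)).app P.complex := rfl
  rw [NatTrans.app_smul, P.leftDerived_app_eq, P.leftDerived_app_eq, mapHomologicalComplex_smul,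
    Functor.map_smul, Linear.smul_comp, Linear.comp_smul]

theorem isZero_leftDerived_obj_succ_of_preservesHomology (F : C ⥤ D) [F.Additive]
    [F.PreservesHomology] (n : ℕ) (X : C) : IsZero ((F.leftDerived (n + 1)).obj X) := by
  let P := projectiveResolution X
  have exactAt_succ : ((F.mapHomologicalComplex _).obj P.complex).ExactAt (n + 1) :=
    ShortComplex.Exact.map (P.complex_exactAt_succ n) F
  exact exactAt_succ.isZero_homology.of_iso (P.isoLeftDerivedObj F (n + 1))

end LeftDerived

section TorExt

instance tor_linear {R C : Type*} [Semiring R] [Category* C] [MonoidalCategory C] [Abelian C]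
    [MonoidalPreadditive C] [HasProjectiveResolutions C] [Linear R C] [MonoidalLinear R C]
    (n : ℕ) : (Tor C n).Linear R where
  map_smul f r := by
    rw [Tor_map, Functor.map_smul]
    exact natTrans_leftDerived_smul r _ n

variable {R C : Type*} [CommRing R] [Category* C]

instance linearYoneda_obj_linear [Preadditive C] [Linear R C] (Y : C) :
    ((linearYoneda R C).obj Y).Linear R where
  map_smul f r := by
    ext g
    exact Linear.smul_comp _ _ _ r f.unop g

instance ext_linear [Abelian C] [EnoughProjectives C] [Linear R C] (n : ℕ) :
    (Ext R C n).Linear R where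
  map_smul f r := by
    ext Y : 2
    exact Functor.map_smul ((((linearYoneda R C).obj Y).rightOp.leftDerived n).leftOp) r f

end TorExt

section Annihilators

open Limits

universe u v

variable {R : Type u} [CommRing R]

theorem mem_annihilator_iff_smul_id {N : ModuleCat.{v} R} {r : R} :
    r ∈ Module.annihilator R N ↔ r • 𝟙 N = 0 := by
  rw [Module.mem_annihilator, ModuleCat.hom_ext_iff, LinearMap.ext_iff]
  rfl

theorem isZero_tor_succ_of_flat (F : ModuleCat.{u} R) [Module.Flat R F] (n : ℕ) :
    IsZero ((Tor (ModuleCat.{u} R) (n + 1)).obj F) :=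
  Functor.isZero _ fun X ↦
    isZero_leftDerived_obj_succ_of_preservesHomology (MonoidalCategory.tensorLeft F) n X

theorem splittingIdeal_le_annihilator_tor {F M : ModuleCat.{u} R} [Module.Flat R F]
    (b : F →ₗ[R] M) (n : ℕ) (X : ModuleCat.{u} R) :
    splittingIdeal b ≤ Module.annihilator R (((Tor (ModuleCat.{u} R) (n + 1)).obj M).obj X) := by
  intro r hr
  obtain ⟨a, ha⟩ := mem_splittingIdeal.mp hr
  have factors : ModuleCat.ofHom a ≫ ModuleCat.ofHom b = r • 𝟙 M := ModuleCat.hom_ext ha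
  have smul_id_eq_zero := smul_id_obj_eq_zero_of_factors _ (isZero_tor_succ_of_flat F n) factors
  exact mem_annihilator_iff_smul_id.mpr (NatTrans.congr_app smul_id_eq_zero X)

theorem splittingIdeal_le_annihilator_ext {F M : ModuleCat.{u} R} [Module.Projective R F]
    (b : F →ₗ[R] M) (n : ℕ) (X : ModuleCat.{u} R) :
    splittingIdeal b ≤ Module.annihilator R
      (((Ext R (ModuleCat.{u} R) (n + 1)).obj (Opposite.op M)).obj X) := by
  intro r hr
  obtain ⟨a, ha⟩ := mem_splittingIdeal.mp hr
  have factors : (ModuleCat.ofHom b).op ≫ (ModuleCat.ofHom a).op = r • 𝟙 (Opposite.op M) :=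
    congrArg Quiver.Hom.op (ModuleCat.hom_ext ha)
  have : Projective F := (IsProjective.iff_projective F).mp inferInstance
  have isZero_ext : IsZero ((Ext R (ModuleCat.{u} R) (n + 1)).obj (Opposite.op F)) :=
    Functor.isZero _ fun X ↦ isZero_Ext_succ_of_projective F X n
  have smul_id_eq_zero := smul_id_obj_eq_zero_of_factors _ isZero_ext factors
  exact mem_annihilator_iff_smul_id.mpr (NatTrans.congr_app smul_id_eq_zero X)

theorem stmt16_general (M : ModuleCat.{u} R) [Module.FinitePresentation R M] {I : Ideal R}
    (hI : I.FG) (hNF : (Module.freeLocus R M)ᶜ ⊆ PrimeSpectrum.zeroLocus (I : Set R)) :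
    ∃ h : ℕ, 0 < h ∧ ∀ i : ℕ, 0 < i → ∀ X : ModuleCat.{u} R,
      I ^ h ≤ Module.annihilator R (((Tor (ModuleCat.{u} R) i).obj M).obj X) ∧
      I ^ h ≤ Module.annihilator R
        (((Ext R (ModuleCat.{u} R) i).obj (Opposite.op M)).obj X) := by
  obtain ⟨k, b, hb⟩ := Module.Finite.exists_fin' R M
  obtain ⟨n, hn⟩ := Ideal.exists_pow_le_of_le_radical_of_fg (le_radical_splittingIdeal hb hNF) hI
  have pow_le : I ^ (n + 1) ≤ splittingIdeal b := (Ideal.pow_le_pow_right n.le_succ).trans hn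
  refine ⟨n + 1, n.succ_pos, fun i hi X ↦ ?_⟩
  obtain ⟨j, rfl⟩ := Nat.exists_eq_add_one.mpr hi
  exact ⟨pow_le.trans (splittingIdeal_le_annihilator_tor (F := .of R (Fin k → R)) b j X),
    pow_le.trans (splittingIdeal_le_annihilator_ext (F := .of R (Fin k → R)) b j X)⟩

end Annihilators

/-- Let `R` be a noetherian commutative ring, `M` a finitely generated
`R`-module and `I` an ideal with `NF(M) = V(I)`. Then there exists `h > 0` such that `I^h`
annihilates `Tor_i(M,X)` and `Ext^i(M,X)` for all `i > 0` and all finitely generated `X`. -/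
theorem stmt16 (R : Type) [CommRing R] [IsNoetherianRing R]
    (M : ModuleCat.{0} R) (hM : Module.Finite R M) (I : Ideal R)
    (hNF : nonfreeLocus R M = PrimeSpectrum.zeroLocus (I : Set R)) :
    ∃ h : ℕ, 0 < h ∧ ∀ i : ℕ, 0 < i → ∀ X : ModuleCat.{0} R, Module.Finite R X →
      I ^ h ≤ Module.annihilator R (TorMod R i M X) ∧
      I ^ h ≤ Module.annihilator R (ExtMod R i M X) := by
  have := Module.finitePresentation_of_finite R M
  obtain ⟨h, hpos, hann⟩ := stmt16_general M (IsNoetherian.noetherian I) hNF.subset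
  exact ⟨h, hpos, fun i hi X _ ↦ hann i hi X⟩

end
end
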